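/- arXiv:2003.11400 — 3 statements merged into one kernel-verified Lean document; each statement's English description precedes it below -/
import Mathlib

section
/- Let T > 0 and k ≥ 1. For each 1 ≤ i ≤ k let n_i ≥ 1 and 0 = t_{i,0} < t_{i,1} < … < t_{i,n_i−1} < t_{i,n_i} = T, and for each N let n_i^N ≥ 1 and 0 = t_{i,0}^N < t_{i,1}^N < … < t_{i,n_i^N−1}^N < t_{i,n_i^N}^N = T. Define g, g_N : [0,T] → ℝ^k by: the i-th coordinate of g(t) equals j for t ∈ [t_{i,j}, t_{i,j+1}) (0 ≤ j ≤ n_i − 1) and g(T)_i = n_i − 1; and analogously for g_N with the times t_{i,j}^N. Assume: (1) there is a dense subset A ⊆ [0,T] with T ∈ A such that g_N(t) → g(t) for every t ∈ A; (2) for all i₁ ≠ i₂ and all 1 ≤ j₁ ≤ n_{i₁} − 1, 1 ≤ j₂ ≤ n_{i₂} − 1, one has t_{i₁,j₁} ≠ t_{i₂,j₂}. Then: for all N large enough, n_i^N = n_i for every i; for every i and every 1 ≤ j ≤ n_i − 1, t_{i,j}^N → t_{i,j} as N → ∞; and there exist continuous, strictly increasing bijections λ_N : [0,T] → [0,T]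 such that sup_{t∈[0,T]} |λ_N(t) − t| → 0 and, for all N large enough, g_N = g ∘ λ_N on [0,T]. In particular g_N converges to g in the Skorokhod sense on [0,T]. -/
open MeasureTheory Filter Topology Set

noncomputable section

/-- Skorokhod convergence on `[0,T]`: there are continuous strictly increasing bijections
`λ_N : [0,T] → [0,T]` with `sup |λ_N - id| → 0` and `sup ‖g_N - g ∘ λ_N‖ → 0`
(the norm on `ℝ^k = Fin k → ℝ` being the supremum norm). -/
def SkorokhodTendstoOn {E : Type*} [NormedAddCommGroup E]
    (x : ℕ → ℝ → E) (y : ℝ → E) (T : ℝ) : Prop :=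
  ∃ lam : ℕ → ℝ → ℝ,
    (∀ k, ContinuousOn (lam k) (Set.Icc 0 T)) ∧
    (∀ k, StrictMonoOn (lam k) (Set.Icc 0 T)) ∧
    (∀ k, Set.BijOn (lam k) (Set.Icc 0 T) (Set.Icc 0 T)) ∧
    (∀ ε > 0, ∀ᶠ k in Filter.atTop, ∀ t ∈ Set.Icc 0 T, |lam k t - t| < ε) ∧
    (∀ ε > 0, ∀ᶠ k in Filter.atTop, ∀ t ∈ Set.Icc 0 T, ‖x k t - y (lam k t)‖ < ε)

lemma step_mono {m : ℕ} {u : ℕ → ℝ} (hu : ∀ j < m, u j < u (j + 1)) :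
    ∀ a b, a < b → b ≤ m → u a < u b := by
  intro a b hab hb
  induction b, hab using Nat.le_induction with
  | base => exact hu a (by omega)
  | succ b hab ih => exact (ih (by omega)).trans (hu b (by omega))

lemma step_mono_le {m : ℕ} {u : ℕ → ℝ} (hu : ∀ j < m, u j < u (j + 1)) :
    ∀ a b, a ≤ b → b ≤ m → u a ≤ u b := by
  intro a b hab hb
  rcases hab.eq_or_lt with rfl | h
  · exact le_rfl
  · exact (step_mono hu a b h hb).le

lemma step_exists {T : ℝ} {m : ℕ} {u : ℕ → ℝ} (h0 : u 0 = 0) (hT : u m = T)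
    (s : ℝ) (hs : s ∈ Set.Ico 0 T) : ∃ l < m, s ∈ Set.Ico (u l) (u (l + 1)) := by
  classical
  have hex : ∃ l, s < u l := ⟨m, by rw [hT]; exact hs.2⟩
  have h1 := Nat.find_spec hex
  have h2 : Nat.find hex ≤ m := Nat.find_min' hex (by rw [hT]; exact hs.2)
  have h3 : Nat.find hex ≠ 0 := by
    intro h
    rw [h, h0] at h1
    exact absurd hs.1 (not_le.mpr h1)
  obtain ⟨l, hl⟩ := Nat.exists_eq_succ_of_ne_zero h3
  have h4 : ¬ s < u l := Nat.find_min hex (by omega)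
  rw [hl] at h1 h2
  exact ⟨l, by omega, not_lt.mp h4, h1⟩

lemma step_iff {T : ℝ} {m : ℕ} (hm : 1 ≤ m) {u : ℕ → ℝ} (h0 : u 0 = 0) (hT : u m = T)
    (hu : ∀ j < m, u j < u (j + 1)) {f : ℝ → ℝ}
    (hf : ∀ j < m, ∀ s ∈ Set.Ico (u j) (u (j + 1)), f s = j) (hfT : f T = m - 1)
    (s : ℝ) (hs : s ∈ Set.Icc 0 T) : ∃ l : ℕ, f s = l ∧ ∀ j < m, (u j ≤ s ↔ j ≤ l) := by
  rcases hs.2.eq_or_lt with rfl | hlt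
  · refine ⟨m - 1, ?_, ?_⟩
    · rw [hfT]; push_cast [hm]; ring
    · intro j hj
      have := step_mono hu j m hj le_rfl
      exact ⟨fun _ => by omega, fun _ => by rw [← hT]; exact this.le⟩
  · obtain ⟨l, hl, hs'⟩ := step_exists h0 hT s ⟨hs.1, hlt⟩
    refine ⟨l, hf l hl s hs', ?_⟩
    intro j hj
    constructor
    · intro h
      by_contra hc
      have := step_mono_le hu (l + 1) j (by omega) hj.le
      linarith [hs'.2]
    · intro h
      exact (step_mono_le hu j l h hl.le).trans hs'.1

/-- A plateau function: `1` for `|s - a| ≤ δ`, `0` for `|s - a| ≥ 2δ`. -/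
def plateau (δ a s : ℝ) : ℝ := max 0 (min 1 (2 - |s - a| / δ))

lemma plateau_one {δ a s : ℝ} (hδ : 0 < δ) (h : |s - a| ≤ δ) : plateau δ a s = 1 := by
  have : |s - a| / δ ≤ 1 := by rw [div_le_one hδ]; exact h
  unfold plateau
  rw [min_eq_left (by linarith), max_eq_right (by norm_num)]

lemma plateau_zero {δ a s : ℝ} (hδ : 0 < δ) (h : 2 * δ ≤ |s - a|) : plateau δ a s = 0 := by
  have : 2 ≤ |s - a| / δ := by rw [le_div_iff₀ hδ]; exact h
  unfold plateau
  exact max_eq_left ((min_le_right _ _).trans (by linarith))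

lemma plateau_abs_le (δ a s : ℝ) : |plateau δ a s| ≤ 1 := by
  unfold plateau
  rw [abs_of_nonneg (le_max_left _ _)]
  exact max_le (by norm_num) (min_le_left _ _)

lemma plateau_cont (δ a : ℝ) : Continuous (plateau δ a) := by
  unfold plateau
  fun_prop

lemma plateau_lip {δ a : ℝ} (hδ : 0 < δ) (x y : ℝ) :
    |plateau δ a x - plateau δ a y| ≤ |x - y| / δ := by
  unfold plateau
  have h1 : |(2 - |x - a| / δ) - (2 - |y - a| / δ)| ≤ |x - y| / δ := by
    have e : (2 - |x - a| / δ) - (2 - |y - a| / δ) = (|y - a| - |x - a|) / δ := by ring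
    rw [e, abs_div, abs_of_pos hδ]
    refine div_le_div_of_nonneg_right ?_ hδ.le
    have := abs_abs_sub_abs_le_abs_sub (y - a) (x - a)
    rw [abs_sub_comm x y]
    simpa using this
  refine le_trans ?_ h1
  generalize (2 - |x - a| / δ) = p
  generalize (2 - |y - a| / δ) = q
  have h2 := abs_max_sub_max_le_max 0 (min 1 p) 0 (min 1 q)
  have h3 := abs_min_sub_min_le_max 1 p 1 q
  simp at h2 h3
  linarith

lemma warp {T : ℝ} (hT : 0 < T) {ι : Type} [Fintype ι] (τ : ι → ℝ)
    (hinj : Function.Injective τ) (hτ : ∀ p, τ p ∈ Set.Ioo 0 T) (τN : ℕ → ι → ℝ)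
    (hlim : ∀ p, Tendsto (fun N => τN N p) atTop (𝓝 (τ p))) :
    ∃ lam : ℕ → ℝ → ℝ,
      (∀ N, ContinuousOn (lam N) (Set.Icc 0 T)) ∧
      (∀ N, StrictMonoOn (lam N) (Set.Icc 0 T)) ∧
      (∀ N, Set.BijOn (lam N) (Set.Icc 0 T) (Set.Icc 0 T)) ∧
      (∀ ε > 0, ∀ᶠ N in Filter.atTop, ∀ s ∈ Set.Icc 0 T, |lam N s - s| < ε) ∧
      (∀ N, lam N 0 = 0) ∧ (∀ N, lam N T = T) ∧
      (∀ᶠ N in Filter.atTop, ∀ p, lam N (τN N p) = τ p) := by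
  classical
  obtain ⟨δ, ⟨hδ1, hδ2⟩, hδ⟩ : ∃ δ : ℝ, ((∀ p, 2 * δ < τ p ∧ 2 * δ < T - τ p) ∧
      (∀ p q, p ≠ q → 3 * δ < |τ q - τ p|)) ∧ 0 < δ := by
    have hz : ∀ (c x : ℝ), 0 < x → ∀ᶠ δ in 𝓝[>] (0:ℝ), c * δ < x := by
      intro c x hx
      have : Tendsto (fun δ : ℝ => c * δ) (𝓝[>] 0) (𝓝 (c * 0)) :=
        (tendsto_id.const_mul c).mono_left nhdsWithin_le_nhds
      rw [mul_zero] at this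
      exact this.eventually (gt_mem_nhds hx)
    have ha : ∀ᶠ δ in 𝓝[>] (0:ℝ), ∀ p, 2 * δ < τ p ∧ 2 * δ < T - τ p :=
      eventually_all.2 fun p =>
        (hz 2 _ (hτ p).1).and (hz 2 _ (sub_pos.2 (hτ p).2))
    have hb : ∀ᶠ δ in 𝓝[>] (0:ℝ), ∀ p q, p ≠ q → 3 * δ < |τ q - τ p| := by
      refine eventually_all.2 fun p => eventually_all.2 fun q => ?_
      by_cases hpq : p = q
      · exact Eventually.of_forall fun _ h => absurd hpq h
      · have : 0 < |τ q - τ p| := abs_pos.2 (sub_ne_zero.2 fun h => hpq (hinj h).symm)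
        exact (hz 3 _ this).mono fun _ h _ => h
    exact ((ha.and hb).and self_mem_nhdsWithin).exists
  let S : ℕ → ℝ := fun N => ∑ p, |τ p - τN N p|
  have hS : Tendsto S atTop (𝓝 0) := by
    have : Tendsto S atTop (𝓝 (∑ p, |τ p - τ p|)) :=
      tendsto_finsetSum _ fun p _ => ((tendsto_const_nhds).sub (hlim p)).abs
    simpa using this
  have hSp : ∀ N p, |τ p - τN N p| ≤ S N := fun N p =>
    Finset.single_le_sum (f := fun p => |τ p - τN N p|) (fun _ _ => abs_nonneg _)
      (Finset.mem_univ p)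
  let D : ℕ → ℝ → ℝ := fun N s => ∑ p, (τ p - τN N p) * plateau δ (τ p) s
  have hD : ∀ N s, |D N s| ≤ S N := by
    intro N s
    refine (Finset.abs_sum_le_sum_abs _ _).trans (Finset.sum_le_sum fun p _ => ?_)
    rw [abs_mul]
    exact mul_le_of_le_one_right (abs_nonneg _) (plateau_abs_le _ _ _)
  have hDl : ∀ N x y, |D N x - D N y| ≤ S N * (|x - y| / δ) := by
    intro N x y
    simp only [D, S]
    rw [← Finset.sum_sub_distrib, Finset.sum_mul]
    refine (Finset.abs_sum_le_sum_abs _ _).trans (Finset.sum_le_sum fun p _ => ?_)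
    rw [← mul_sub, abs_mul]
    exact mul_le_mul_of_nonneg_left (plateau_lip hδ x y) (abs_nonneg _)
  have hD0 : ∀ N, D N 0 = 0 := fun N => Finset.sum_eq_zero fun p _ => by
    rw [plateau_zero hδ, mul_zero]
    rw [zero_sub, abs_neg]
    exact (hδ1 p).1.le.trans (le_abs_self _)
  have hDT : ∀ N, D N T = 0 := fun N => Finset.sum_eq_zero fun p _ => by
    rw [plateau_zero hδ, mul_zero]
    exact (hδ1 p).2.le.trans (le_abs_self _)
  let lam : ℕ → ℝ → ℝ := fun N s => if S N < δ then s + D N s else s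
  have hc : ∀ N, ContinuousOn (lam N) (Set.Icc 0 T) := by
    intro N
    apply Continuous.continuousOn
    by_cases h : S N < δ
    · simp only [lam, h, if_true, D]
      have := fun p => plateau_cont δ (τ p)
      fun_prop
    · simp only [lam, h, if_false]
      fun_prop
  have hm : ∀ N, StrictMonoOn (lam N) (Set.Icc 0 T) := by
    intro N
    apply StrictMono.strictMonoOn
    intro x y hxy
    by_cases h : S N < δ
    · simp only [lam, h, if_true]
      have h1 := hDl N x y
      have h2 : S N * (|x - y| / δ) < |x - y| := by
        rw [mul_div_assoc', div_lt_iff₀ hδ, mul_comm]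
        exact mul_lt_mul_of_pos_left h (abs_pos.2 (sub_ne_zero.2 hxy.ne))
      have h3 := le_abs_self (D N x - D N y)
      have h4 : |x - y| = y - x := by rw [abs_sub_comm, abs_of_pos (sub_pos.2 hxy)]
      linarith
    · simpa only [lam, h, if_false] using hxy
  have hl0 : ∀ N, lam N 0 = 0 := fun N => by simp [lam, hD0]
  have hlT : ∀ N, lam N T = T := fun N => by simp [lam, hDT]
  refine ⟨lam, hc, hm, ?_, ?_, hl0, hlT, ?_⟩
  · intro N
    refine ⟨?_, (hm N).injOn, ?_⟩
    · intro s hs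
      have a := (hm N).monotoneOn (left_mem_Icc.2 hT.le) hs hs.1
      have b := (hm N).monotoneOn hs (right_mem_Icc.2 hT.le) hs.2
      rw [hl0] at a
      rw [hlT] at b
      exact ⟨a, b⟩
    · have := intermediate_value_Icc hT.le (hc N)
      rwa [hl0, hlT] at this
  · intro ε hε
    filter_upwards [hS.eventually (gt_mem_nhds hε)] with N hN s _
    by_cases h : S N < δ
    · simp only [lam, h, if_true]
      rw [add_sub_cancel_left]
      exact (hD N s).trans_lt hN
    · simpa [lam, h] using hε
  · filter_upwards [hS.eventually (gt_mem_nhds hδ)] with N hN q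
    simp only [lam, hN, if_true, D]
    rw [Finset.sum_eq_single q]
    · rw [plateau_one hδ]
      · ring
      · rw [abs_sub_comm]
        exact (hSp N q).trans hN.le
    · intro p _ hp
      rw [plateau_zero hδ, mul_zero]
      have a := hδ2 p q hp
      have b := (hSp N q).trans hN.le
      have c := abs_sub_le (τ q) (τN N q) (τ p)
      linarith
    · intro h
      exact absurd (Finset.mem_univ q) h

/-- Convergence of piecewise-constant counting-type functions: if the step functions `g_N`
converge pointwise to `g` on a dense subset of `[0,T]` containing `T`, and the jump times of the
distinct coordinates of `g` are pairwise distinct, then the numbers of jumps stabilize, the jump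
times converge, and `g_N → g` in the Skorokhod sense on `[0,T]` (indeed `g_N = g ∘ λ_N`
eventually). -/
theorem statement1 (T : ℝ) (hT : 0 < T) (k : ℕ) (hk : 1 ≤ k)
    (n : Fin k → ℕ) (hn : ∀ i, 1 ≤ n i)
    (t : Fin k → ℕ → ℝ)
    (ht0 : ∀ i, t i 0 = 0) (htT : ∀ i, t i (n i) = T)
    (htmono : ∀ i, ∀ j < n i, t i j < t i (j + 1))
    (nN : ℕ → Fin k → ℕ) (hnN : ∀ N i, 1 ≤ nN N i)
    (tN : ℕ → Fin k → ℕ → ℝ)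
    (htN0 : ∀ N i, tN N i 0 = 0) (htNT : ∀ N i, tN N i (nN N i) = T)
    (htNmono : ∀ N i, ∀ j < nN N i, tN N i j < tN N i (j + 1))
    (g : ℝ → Fin k → ℝ) (gN : ℕ → ℝ → Fin k → ℝ)
    (hg : ∀ i, ∀ j < n i, ∀ s ∈ Set.Ico (t i j) (t i (j + 1)), g s i = j)
    (hgT : ∀ i, g T i = n i - 1)
    (hgN : ∀ N i, ∀ j < nN N i, ∀ s ∈ Set.Ico (tN N i j) (tN N i (j + 1)), gN N s i = j)
    (hgNT : ∀ N i, gN N T i = nN N i - 1)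
    (A : Set ℝ) (hA_sub : A ⊆ Set.Icc 0 T) (hA_dense : Set.Icc 0 T ⊆ closure A)
    (hTA : T ∈ A)
    (hptwise : ∀ s ∈ A, Filter.Tendsto (fun N => gN N s) Filter.atTop (nhds (g s)))
    (hdistinct : ∀ i₁ i₂ : Fin k, i₁ ≠ i₂ →
      ∀ j₁ j₂ : ℕ, 1 ≤ j₁ → j₁ ≤ n i₁ - 1 → 1 ≤ j₂ → j₂ ≤ n i₂ - 1 →
        t i₁ j₁ ≠ t i₂ j₂) :
    (∀ᶠ N in Filter.atTop, ∀ i, nN N i = n i) ∧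
    (∀ i : Fin k, ∀ j : ℕ, 1 ≤ j → j ≤ n i - 1 →
      Filter.Tendsto (fun N => tN N i j) Filter.atTop (nhds (t i j))) ∧
    (∃ lam : ℕ → ℝ → ℝ,
      (∀ N, ContinuousOn (lam N) (Set.Icc 0 T)) ∧
      (∀ N, StrictMonoOn (lam N) (Set.Icc 0 T)) ∧
      (∀ N, Set.BijOn (lam N) (Set.Icc 0 T) (Set.Icc 0 T)) ∧
      (∀ ε > 0, ∀ᶠ N in Filter.atTop, ∀ s ∈ Set.Icc 0 T, |lam N s - s| < ε) ∧
      (∀ᶠ N in Filter.atTop, ∀ s ∈ Set.Icc 0 T, gN N s = g (lam N s))) ∧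
    SkorokhodTendstoOn gN g T := by
  have hcoord : ∀ s ∈ A, ∀ i, Tendsto (fun N => gN N s i) atTop (𝓝 (g s i)) :=
    fun s hs i => (tendsto_pi_nhds.1 (hptwise s hs)) i
  have hA : ∀ x y : ℝ, 0 ≤ x → x < y → y ≤ T → ∃ a ∈ A, x < a ∧ a < y := by
    intro x y hx hxy hy
    have hmem : (x + y) / 2 ∈ closure A := hA_dense ⟨by linarith, by linarith⟩
    obtain ⟨a, ha, haA⟩ := mem_closure_iff.1 hmem (Ioo x y) isOpen_Ioo
      ⟨by linarith, by linarith⟩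
    exact ⟨a, haA, ha.1, ha.2⟩
  have h1 : ∀ᶠ N in Filter.atTop, ∀ i, nN N i = n i := by
    refine eventually_all.2 fun i => ?_
    have h := hcoord T hTA i
    filter_upwards [h.eventually (Metric.ball_mem_nhds _ one_pos)] with N hN
    rw [Real.dist_eq, hgNT, hgT, abs_lt] at hN
    have a : (nN N i : ℝ) < n i + 1 := by linarith [hN.2]
    have b : (n i : ℝ) < nN N i + 1 := by linarith [hN.1]
    norm_cast at a b
    omega
  have h2 : ∀ i : Fin k, ∀ j : ℕ, 1 ≤ j → j ≤ n i - 1 →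
      Filter.Tendsto (fun N => tN N i j) Filter.atTop (nhds (t i j)) := by
    intro i j hj1 hj2
    have hni := hn i
    have hjlt : j < n i := by omega
    have hpos : 0 < t i j := by
      rw [← ht0 i]; exact step_mono (htmono i) 0 j (by omega) hjlt.le
    have hltT : t i j < T := by
      rw [← htT i]; exact step_mono (htmono i) j (n i) hjlt le_rfl
    rw [Metric.tendsto_nhds]
    intro ε hε
    obtain ⟨a, haA, ha1, ha2⟩ := hA (max 0 (t i j - ε)) (t i j) (le_max_left _ _)
      (max_lt hpos (by linarith)) hltT.le
    obtain ⟨b, hbA, hb1, hb2⟩ := hA (t i j) (min T (t i j + ε)) hpos.le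
      (lt_min hltT (by linarith)) (min_le_left _ _)
    have ha3 := (le_max_right _ _).trans_lt ha1
    have hb3 := hb2.trans_le (min_le_right _ _)
    filter_upwards [h1, (hcoord a haA i).eventually (Metric.ball_mem_nhds _ one_pos),
      (hcoord b hbA i).eventually (Metric.ball_mem_nhds _ one_pos)] with N hN hNa hNb
    have hjN : j < nN N i := by rw [hN]; exact hjlt
    have key := fun s hs => step_iff (hn i) (ht0 i) (htT i) (htmono i) (f := fun s => g s i)
      (hg i) (hgT i) s hs
    have keyN := fun s hs => step_iff (hnN N i) (htN0 N i) (htNT N i) (htNmono N i)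
      (f := fun s => gN N s i) (hgN N i) (hgNT N i) s hs
    have same : ∀ s ∈ A, gN N s i ∈ Metric.ball (g s i) 1 → (t i j ≤ s ↔ tN N i j ≤ s) := by
      intro s hs hball
      obtain ⟨l, hl, hl'⟩ := key s (hA_sub hs)
      obtain ⟨l2, hl2, hl2'⟩ := keyN s (hA_sub hs)
      rw [hl' j hjlt, hl2' j hjN]
      rw [hl, hl2, Metric.mem_ball, Real.dist_eq, abs_lt] at hball
      have x : (l2 : ℝ) < l + 1 := by linarith [hball.2]
      have y : (l : ℝ) < l2 + 1 := by linarith [hball.1]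
      norm_cast at x y
      have : l = l2 := by omega
      rw [this]
    have ra : a < tN N i j := by
      rw [← not_le, ← same a haA hNa, not_le]; exact ha2
    have rb : tN N i j ≤ b := (same b hbA hNb).1 hb1.le
    rw [Real.dist_eq, abs_lt]
    constructor <;> linarith
  have h3 : ∃ lam : ℕ → ℝ → ℝ,
      (∀ N, ContinuousOn (lam N) (Set.Icc 0 T)) ∧
      (∀ N, StrictMonoOn (lam N) (Set.Icc 0 T)) ∧
      (∀ N, Set.BijOn (lam N) (Set.Icc 0 T) (Set.Icc 0 T)) ∧
      (∀ ε > 0, ∀ᶠ N in Filter.atTop, ∀ s ∈ Set.Icc 0 T, |lam N s - s| < ε) ∧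
      (∀ᶠ N in Filter.atTop, ∀ s ∈ Set.Icc 0 T, gN N s = g (lam N s)) := by
    obtain ⟨lam, hc, hm, hb, hu, hl0, hlT, hp⟩ := warp hT
      (ι := (i : Fin k) × Fin (n i - 1)) (fun p => t p.1 (p.2 + 1))
      (by
        rintro ⟨i, j⟩ ⟨i', j'⟩ h
        simp only at h
        have hj := j.2
        have hj' := j'.2
        by_cases hi : i = i'
        · subst hi
          have : (j : ℕ) = j' := by
            rcases lt_trichotomy (j : ℕ) j' with hlt | heq | hlt
            · exact absurd h (step_mono (htmono i) _ _ (by omega) (by omega)).ne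
            · exact heq
            · exact absurd h (step_mono (htmono i) _ _ (by omega) (by omega)).ne'
          rw [Fin.ext this]
        · exact absurd h (hdistinct i i' hi _ _ (by omega) (by omega) (by omega) (by omega)))
      (by
        rintro ⟨i, j⟩
        have hj := j.2
        constructor
        · rw [← ht0 i]; exact step_mono (htmono i) _ _ (by omega) (by simp only; omega)
        · rw [← htT i]; exact step_mono (htmono i) _ _ (by simp only; omega) le_rfl)
      (fun N p => tN N p.1 (p.2 + 1))
      (by
        rintro ⟨i, j⟩
        have hj := j.2
        exact h2 i (j + 1) (by omega) (by omega))
    refine ⟨lam, hc, hm, hb, hu, ?_⟩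
    filter_upwards [h1, hp] with N hN hpN s hs
    have hval : ∀ i j, j ≤ n i → lam N (tN N i j) = t i j := by
      intro i j hj
      rcases Nat.eq_zero_or_pos j with rfl | hj0
      · rw [htN0, ht0, hl0]
      rcases hj.eq_or_lt with rfl | hlt
      · rw [htT, ← hN i, htNT, hlT]
      have := hpN ⟨i, ⟨j - 1, by omega⟩⟩
      simp only at this
      rwa [Nat.sub_add_cancel hj0] at this
    funext i
    rcases hs.2.eq_or_lt with rfl | hlt
    · rw [hlT, hgNT, hgT, hN]
    obtain ⟨l, hl, hs'⟩ := step_exists (htN0 N i) (htNT N i) s ⟨hs.1, hlt⟩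
    have hmem : ∀ j ≤ nN N i, tN N i j ∈ Icc 0 T := fun j hj =>
      ⟨by rw [← htN0 N i]; exact step_mono_le (htNmono N i) _ _ (Nat.zero_le _) hj,
        by rw [← htNT N i]; exact step_mono_le (htNmono N i) _ _ hj le_rfl⟩
    rw [hgN N i l hl s hs', hg i l (by rw [← hN]; exact hl)]
    constructor
    · rw [← hval i l (by rw [← hN]; exact hl.le)]
      exact (hm N).monotoneOn (hmem l hl.le) hs hs'.1
    · rw [← hval i (l + 1) (by rw [← hN]; exact hl)]
      exact hm N hs (hmem (l + 1) hl) hs'.2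
  refine ⟨h1, h2, h3, ?_⟩
  obtain ⟨lam, hc, hm, hb, hu, he⟩ := h3
  refine ⟨lam, hc, hm, hb, hu, ?_⟩
  intro ε hε
  filter_upwards [he] with N hN s hs
  rw [hN s hs, sub_self, norm_zero]
  exact hε
end
end

section
/- Let T > 0, let x, x_1, x_2, … : [0,T] → ℝ be càdlàg functions with (x_k) converging to x in the Skorokhod sense on [0,T], and let τ ∈ (0,T) be a continuity point of x. Let (τ_k) be a sequence in (0,T) with τ_k → τ, and let (ζ_k) be a sequence of reals with ζ_k → ζ where ζ ≠ x(τ). Then for all k large enough, the indicator 1{ζ_k ≤ x_k(τ_k−)} equals 1{ζ ≤ x(τ)}; in particular 1{ζ_k ≤ x_k(τ_k−)} → 1{ζ ≤ x(τ)}. -/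
open MeasureTheory Filter Topology Set

noncomputable section

/-- `x` is càdlàg on `[0,T]`: right-continuous at every point of `[0,T)`
and with a left limit at every point of `(0,T]`. -/
def CadlagOn (x : ℝ → ℝ) (T : ℝ) : Prop :=
  (∀ t ∈ Set.Ico 0 T, ContinuousWithinAt x (Set.Icc t T) t) ∧
  (∀ t ∈ Set.Ioc 0 T, ∃ L : ℝ, Filter.Tendsto x (nhdsWithin t (Set.Iio t)) (nhds L))

/-- If càdlàg `x_k → x` in the Skorokhod sense on `[0,T]`, `τ_k → τ ∈ (0,T)` with `x` continuous
at `τ`, and `ζ_k → ζ` with `ζ ≠ x(τ)`, then eventually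
`1{ζ_k ≤ x_k(τ_k−)} = 1{ζ ≤ x(τ)}`; in particular the indicators converge.
Here `xl k s` denotes the left limit of `x_k` at `s`. -/
theorem statement3 (T : ℝ) (hT : 0 < T)
    (x : ℝ → ℝ) (xk : ℕ → ℝ → ℝ) (xl : ℕ → ℝ → ℝ)
    (hx : CadlagOn x T) (hxk : ∀ k, CadlagOn (xk k) T)
    (hxl : ∀ k, ∀ s ∈ Set.Ioc 0 T,
      Filter.Tendsto (xk k) (nhdsWithin s (Set.Iio s)) (nhds (xl k s)))
    (hconv : SkorokhodTendstoOn xk x T)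
    (τ : ℝ) (hτ : τ ∈ Set.Ioo 0 T)
    (hcont : ContinuousWithinAt x (Set.Icc 0 T) τ)
    (τk : ℕ → ℝ) (hτk : ∀ k, τk k ∈ Set.Ioo 0 T)
    (hτk_lim : Filter.Tendsto τk Filter.atTop (nhds τ))
    (ζ : ℝ) (ζk : ℕ → ℝ)
    (hζk_lim : Filter.Tendsto ζk Filter.atTop (nhds ζ))
    (hζ : ζ ≠ x τ) :
    (∀ᶠ k in Filter.atTop,
      (if ζk k ≤ xl k (τk k) then (1 : ℝ) else 0) = (if ζ ≤ x τ then (1 : ℝ) else 0)) ∧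
    Filter.Tendsto (fun k => if ζk k ≤ xl k (τk k) then (1 : ℝ) else 0) Filter.atTop
      (nhds (if ζ ≤ x τ then (1 : ℝ) else 0)) := by
  have key : Filter.Tendsto (fun k => xl k (τk k)) Filter.atTop (nhds (x τ)) := by
    obtain ⟨lam, -, -, hbij, hlam, hxlam⟩ := hconv
    rw [Metric.tendsto_atTop']
    rw [Metric.continuousWithinAt_iff] at hcont
    intro ε hε
    obtain ⟨δ, hδ, hc⟩ := hcont (ε / 4) (by positivity)
    have h1 := hlam (δ / 2) (by positivity)
    have h2 := hxlam (ε / 4) (by positivity)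
    have h3 := (Metric.tendsto_nhds.1 hτk_lim) (δ / 2) (by positivity)
    have h4 : ∀ᶠ k in Filter.atTop, dist (xl k (τk k)) (x τ) < ε := by
      filter_upwards [h1, h2, h3] with k h1 h2 h3
      have hk := hτk k
      have hl := hxl k (τk k) ⟨hk.1, hk.2.le⟩
      have hle : dist (xl k (τk k)) (x τ) ≤ ε / 2 := by
        refine le_of_tendsto (hl.dist tendsto_const_nhds) ?_
        rw [Real.dist_eq, abs_lt] at h3
        have hA : ∀ᶠ t in nhdsWithin (τk k) (Set.Iio (τk k)), 0 < t :=
          nhdsWithin_le_nhds (lt_mem_nhds hk.1)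
        have hB : ∀ᶠ t in nhdsWithin (τk k) (Set.Iio (τk k)), τ - δ / 2 < t :=
          nhdsWithin_le_nhds (lt_mem_nhds (by linarith))
        filter_upwards [hA, hB, self_mem_nhdsWithin] with t ht0 htB htl
        have htl' : t < τk k := htl
        have htI : t ∈ Set.Icc 0 T := ⟨ht0.le, by linarith [hk.2]⟩
        have e1 := h1 t htI
        have e2 := h2 t htI
        rw [abs_lt] at e1
        have e3 := hc ((hbij k).mapsTo htI) (by
          rw [Real.dist_eq, abs_lt]; constructor <;> linarith)
        rw [← dist_eq_norm] at e2
        linarith [dist_triangle (xk k t) (x (lam k t)) (x τ)]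
      linarith
    obtain ⟨N, hN⟩ := Filter.eventually_atTop.1 h4
    exact ⟨N, fun n hn => hN n hn.le⟩
  have ev : ∀ᶠ k in Filter.atTop,
      (if ζk k ≤ xl k (τk k) then (1 : ℝ) else 0) = (if ζ ≤ x τ then (1 : ℝ) else 0) := by
    rcases lt_or_gt_of_ne hζ with h | h
    · filter_upwards [hζk_lim.eventually_lt key h] with k hk
      rw [if_pos hk.le, if_pos h.le]
    · filter_upwards [key.eventually_lt hζk_lim h] with k hk
      rw [if_neg (not_le.2 hk), if_neg (not_le.2 h)]
  exact ⟨ev, tendsto_const_nhds.congr' (ev.mono fun k hk => hk.symm)⟩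
end
end

section
/- Let T > 0, let x_n : [0,T] → ℝ be càdlàg functions, and let x̂, x̌ : [0,T] → ℝ be càdlàg. Assume: (1) (x_n) converges to x̌ in the Skorokhod sense on [0,T]; (2) ∫_0^T |x_n(t) − x̂(t)|² dt → 0 as n → ∞. Then x̂(t) = x̌(t) for every t ∈ [0,T). -/
open MeasureTheory Filter Topology Set

noncomputable section

lemma CadlagOn.bdd {f : ℝ → ℝ} {T : ℝ} (hf : CadlagOn f T) :
    ∃ C, ∀ t ∈ Set.Icc 0 T, |f t| ≤ C := by
  refine (isCompact_Icc (a := (0:ℝ)) (b := T)).induction_on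
    (p := fun s => ∃ C, ∀ t ∈ s, |f t| ≤ C) ⟨0, by simp⟩ ?_ ?_ ?_
  · rintro s t hst ⟨C, hC⟩
    exact ⟨C, fun x hx => hC x (hst hx)⟩
  · rintro s t ⟨C, hC⟩ ⟨D, hD⟩
    refine ⟨max C D, ?_⟩
    rintro x (hx | hx)
    · exact (hC x hx).trans (le_max_left _ _)
    · exact (hD x hx).trans (le_max_right _ _)
  · intro t ht
    have hR : ∃ C, ∀ᶠ x in 𝓝 t, x ∈ Set.Icc t T → |f x| ≤ C := by
      rcases lt_or_eq_of_le ht.2 with h | h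
      · have h1 := (hf.1 t ⟨ht.1, h⟩).abs
        refine ⟨|f t| + 1, ?_⟩
        have h2 := h1.eventually_lt_const (lt_add_one (|f t|))
        rw [eventually_nhdsWithin_iff] at h2
        filter_upwards [h2] with x hx hx' using (hx hx').le
      · refine ⟨|f t|, Eventually.of_forall fun x hx => ?_⟩
        have : x = t := le_antisymm (hx.2.trans h.ge) hx.1
        rw [this]
    have hL : ∃ C, ∀ᶠ x in 𝓝 t, x ∈ Set.Ico 0 t → |f x| ≤ C := by
      rcases lt_or_eq_of_le ht.1 with h | h
      · obtain ⟨L, hL⟩ := hf.2 t ⟨h, ht.2⟩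
        refine ⟨|L| + 1, ?_⟩
        have h2 := hL.abs.eventually_lt_const (lt_add_one (|L|))
        rw [eventually_nhdsWithin_iff] at h2
        filter_upwards [h2] with x hx hx' using (hx hx'.2).le
      · refine ⟨0, Eventually.of_forall fun x hx => ?_⟩
        have h1 := hx.1
        have h2 := hx.2
        linarith
    obtain ⟨C, hC⟩ := hR
    obtain ⟨D, hD⟩ := hL
    refine ⟨{x | x ∈ Set.Icc 0 T → |f x| ≤ max C D}  ∩ Set.Icc 0 T, ?_, max C D,
      fun x hx => hx.1 hx.2⟩
    refine inter_mem (mem_nhdsWithin_of_mem_nhds ?_) self_mem_nhdsWithin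
    filter_upwards [hC, hD] with x h1 h2 hx
    rcases lt_or_ge x t with h | h
    · exact (h2 ⟨hx.1, h⟩).trans (le_max_right _ _)
    · exact (h1 ⟨h, hx.2⟩).trans (le_max_left _ _)

lemma CadlagOn.integrable {f : ℝ → ℝ} {T : ℝ} (hf : CadlagOn f T) :
    IntegrableOn f (Set.Icc 0 T) := by
  rw [integrableOn_Icc_iff_integrableOn_Ico]
  obtain ⟨C, hC⟩ := hf.bdd
  have hm : AEMeasurable f (volume.restrict (Set.Ico 0 T)) := by
    refine aemeasurable_of_tendsto_metrizable_ae atTop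
      (f := fun (n : ℕ) t => f (min T ((⌊((n:ℝ) + 1) * t⌋ + 1) / ((n:ℝ) + 1)))) ?_ ?_
    · intro n
      have h1 : Measurable (fun t : ℝ => ⌊((n:ℝ) + 1) * t⌋) :=
        Int.measurable_floor.comp (measurable_const.mul measurable_id)
      have h2 : Measurable (fun k : ℤ => f (min T ((k + 1) / ((n:ℝ) + 1)))) :=
        measurable_from_top
      exact (h2.comp h1).aemeasurable
    · refine (ae_restrict_iff' measurableSet_Ico).2 (Eventually.of_forall fun t ht => ?_)
      refine (hf.1 t ht).tendsto.comp ?_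
      have key : ∀ n : ℕ, t ≤ ((⌊((n:ℝ) + 1) * t⌋ + 1) / ((n:ℝ) + 1)) ∧
          ((⌊((n:ℝ) + 1) * t⌋ + 1) / ((n:ℝ) + 1)) ≤ t + 1 / ((n:ℝ) + 1) := by
        intro n
        have hn : (0:ℝ) < (n:ℝ) + 1 := by positivity
        constructor
        · rw [le_div_iff₀ hn]
          linarith [Int.lt_floor_add_one (((n:ℝ) + 1) * t)]
        · rw [div_le_iff₀ hn, add_mul t, one_div, inv_mul_cancel₀ hn.ne']
          linarith [Int.floor_le (((n:ℝ) + 1) * t)]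
      refine tendsto_nhdsWithin_iff.2 ⟨?_, Eventually.of_forall fun n =>
        ⟨le_min ht.2.le (key n).1, min_le_left _ _⟩⟩
      refine tendsto_of_tendsto_of_tendsto_of_le_of_le tendsto_const_nhds
        (h := fun n : ℕ => t + 1 / ((n:ℝ) + 1)) ?_
        (fun n => le_min ht.2.le (key n).1) (fun n => (min_le_right _ _).trans (key n).2)
      simpa using tendsto_const_nhds.add (tendsto_one_div_add_atTop_nhds_zero_nat (𝕜 := ℝ))
  refine Integrable.of_bound hm.aestronglyMeasurable C ?_
  refine (ae_restrict_iff' measurableSet_Ico).2 (Eventually.of_forall fun t ht => ?_)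
  exact hC t ⟨ht.1, ht.2.le⟩

lemma CadlagOn.sqdiff {f g : ℝ → ℝ} {T : ℝ} (hf : CadlagOn f T) (hg : CadlagOn g T) :
    CadlagOn (fun t => |f t - g t| ^ 2) T := by
  refine ⟨fun t ht => (((hf.1 t ht).sub (hg.1 t ht)).abs).pow 2, fun t ht => ?_⟩
  obtain ⟨L, hL⟩ := hf.2 t ht
  obtain ⟨M, hM⟩ := hg.2 t ht
  exact ⟨_, ((hL.sub hM).abs).pow 2⟩

lemma CadlagOn.near {f : ℝ → ℝ} {T t ε : ℝ} (hf : CadlagOn f T) (ht : t ∈ Set.Ico 0 T)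
    (hε : 0 < ε) : ∃ δ > 0, ∀ s ∈ Set.Icc t T, s < t + δ → |f s - f t| < ε := by
  obtain ⟨δ, hδ, h⟩ := Metric.continuousWithinAt_iff.1 (hf.1 t ht) ε hε
  refine ⟨δ, hδ, fun s hs hs' => h hs ?_⟩
  rw [Real.dist_eq, abs_lt]
  constructor <;> linarith [hs.1]

/-- If a sequence of càdlàg functions converges both in the Skorokhod sense (to `x̌`) and in
`L²([0,T])` (to `x̂`), then the two limits coincide on `[0,T)`. -/
theorem statement13 (T : ℝ) (hT : 0 < T)
    (xn : ℕ → ℝ → ℝ) (xhat xcheck : ℝ → ℝ)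
    (hxn : ∀ n, CadlagOn (xn n) T)
    (hxhat : CadlagOn xhat T) (hxcheck : CadlagOn xcheck T)
    (hSkorokhod : SkorokhodTendstoOn xn xcheck T)
    (hL2 : Filter.Tendsto (fun n => ∫ t in Set.Icc (0:ℝ) T, |xn n t - xhat t| ^ 2)
      Filter.atTop (nhds 0)) :
    ∀ t ∈ Set.Ico 0 T, xhat t = xcheck t := by
  intro t ht
  by_contra hne
  obtain ⟨lam, -, -, hbij, hlam, hx⟩ := hSkorokhod
  obtain ⟨ε, hε, hd⟩ : ∃ ε > 0, |xhat t - xcheck t| = 4 * ε :=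
    ⟨|xhat t - xcheck t| / 4, by have := abs_pos.2 (sub_ne_zero.2 hne); positivity, by ring⟩
  obtain ⟨δ₁, hδ₁, h1⟩ := hxhat.near ht hε
  obtain ⟨δ₂, hδ₂, h2⟩ := hxcheck.near ht hε
  obtain ⟨η, hη, hη1, hη2, hηT⟩ : ∃ η > 0, 3 * η ≤ δ₁ ∧ 3 * η ≤ δ₂ ∧ t + 3 * η ≤ T := by
    refine ⟨min (min δ₁ δ₂) (T - t) / 3, ?_, ?_, ?_, ?_⟩
    · have := ht.2
      have : 0 < min (min δ₁ δ₂) (T - t) := lt_min (lt_min hδ₁ hδ₂) (by linarith)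
      positivity
    · linarith [min_le_left (min δ₁ δ₂) (T - t), min_le_left δ₁ δ₂]
    · linarith [min_le_left (min δ₁ δ₂) (T - t), min_le_right δ₁ δ₂]
    · linarith [min_le_right (min δ₁ δ₂) (T - t)]
  have hpos : 0 < ε ^ 2 * η := by positivity
  obtain ⟨n, hn1, hn2, hn3⟩ :=
    ((hlam η hη).and ((hx ε hε).and (hL2.eventually_lt_const hpos))).exists
  have hint := ((hxn n).sqdiff hxhat).integrable
  have hsub : Set.Icc (t + η) (t + 2 * η) ⊆ Set.Icc 0 T := fun s hs =>
    ⟨by linarith [hs.1, ht.1], by linarith [hs.2]⟩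
  have hle : ∫ s in Set.Icc (t + η) (t + 2 * η), |xn n s - xhat s| ^ 2 ≤
      ∫ s in Set.Icc (0:ℝ) T, |xn n s - xhat s| ^ 2 :=
    setIntegral_mono_set hint (Eventually.of_forall fun s => by positivity)
      hsub.eventuallyLE
  have hlow : ∫ s in Set.Icc (t + η) (t + 2 * η), ε ^ 2 ≤
      ∫ s in Set.Icc (t + η) (t + 2 * η), |xn n s - xhat s| ^ 2 := by
    refine setIntegral_mono_on (by simp) (hint.mono_set hsub) measurableSet_Icc fun s hs => ?_
    have hsT := hsub hs
    have a1 := abs_lt.1 (hn1 s hsT)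
    have a2 := hn2 s hsT
    rw [Real.norm_eq_abs] at a2
    have a3 := h1 s ⟨by linarith [hs.1], hsT.2⟩ (by linarith [hs.2])
    have a4 := h2 (lam n s) ⟨by linarith [hs.1], by linarith [hs.2]⟩ (by linarith [hs.2])
    have : ε ≤ |xn n s - xhat s| := by
      have e : xhat t - xcheck t = -(xhat s - xhat t) - (xn n s - xhat s)
        + (xn n s - xcheck (lam n s)) + (xcheck (lam n s) - xcheck t) := by ring
      rw [abs_lt] at a2 a3 a4
      by_contra hc
      rw [not_le, abs_lt] at hc
      have : |xhat t - xcheck t| < 4 * ε := by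
        rw [abs_lt]
        constructor <;> linarith
      linarith
    gcongr
  rw [setIntegral_const] at hlow
  have hv : volume.real (Set.Icc (t + η) (t + 2 * η)) = η := by
    rw [Real.volume_real_Icc_of_le (by linarith)]
    ring
  rw [hv, smul_eq_mul] at hlow
  linarith
end
end
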